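/- arXiv:0806.3175 — 3 statements merged into one kernel-verified Lean document; each statement's English description precedes it below -/
import Mathlib

section
/- Let k ≥ 1 be an integer and let G be a graph on n vertices whose complement Ḡ is k-regular and contains no cycle of length 4 (equivalently, Ḡ contains no subgraph isomorphic to K_{2,2}: no two distinct vertices of Ḡ have two or more common neighbours in Ḡ). Then box(G) ≥ n/4. -/
/-!
Write `H = Gᶜ`. If `G` is the intersection of interval graphs `I₁, …, I_t`, then `H` is the union of
their complements, each of which is the comparability graph of an interval order and, being
contained in `H`, has no `K_{2,2}`.

Such a complement has a vertex cover with at most two vertices (`exists_two_cover`). Order intervals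
by "`u` lies entirely to the left of `v`" and let `p` have the smallest right endpoint. The sets
of intervals to the right of a given one are nested, and that of `p` is the largest, so if `m ≠ p`
had two vertices to its right, these would form a `K_{2,2}` with `p` and `m`. By nestedness, all the
edges avoiding `p` therefore share the same right end `q`.

Hence `H` has a vertex cover of size at most `2t`. As `H` is `k`-regular with `nk/2` edges, this gives
`nk/2 ≤ 2t·k`, that is `n ≤ 4t`. Since the boxicity is an infimum in `ℕ`, it also has to be
checked that it is attained: every finite graph is an intersection of finitely many interval
graphs (`exists_interval_representation`).
-/

/-- `I` is an interval graph: it can be represented by assigning to each vertex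
a closed real interval so that two distinct vertices are adjacent in `I`
iff their intervals intersect. -/
def IsIntervalGraph {V : Type*} (I : SimpleGraph V) : Prop :=
  ∃ f : V → Set ℝ, (∀ v, ∃ a b : ℝ, a ≤ b ∧ f v = Set.Icc a b) ∧
    ∀ u v : V, u ≠ v → (I.Adj u v ↔ (f u ∩ f v).Nonempty)

/-- The boxicity of `G`: the least `k` such that `G` is the intersection
(infimum) of `k` interval graphs on the same vertex set. -/
noncomputable def boxicity {V : Type*} (G : SimpleGraph V) : ℕ :=
  sInf {k : ℕ | ∃ I : Fin k → SimpleGraph V,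
    (∀ i, IsIntervalGraph (I i)) ∧ G = ⨅ i, I i}

/-- The number of edges of `G`. -/
noncomputable def numEdges {V : Type*} (G : SimpleGraph V) : ℕ :=
  G.edgeSet.ncard

/-- Every finite graph is a finite intersection of interval graphs: for each non-edge `uv`, the
complete graph minus the edge `uv` is an interval graph, with `u ↦ [0,0]`, `v ↦ [1,1]` and every
other vertex sent to `[0,1]`. -/
theorem exists_interval_representation {V : Type*} [Fintype V] [DecidableEq V]
    (G : SimpleGraph V) [DecidableRel G.Adj] :
    ∃ t : ℕ, ∃ I : Fin t → SimpleGraph V, (∀ i, IsIntervalGraph (I i)) ∧ G = ⨅ i, I i := by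
  let e := Fintype.equivFin Gᶜ.Dart
  let l : Gᶜ.Dart → V → ℝ := fun d w => if w = d.snd then 1 else 0
  let r : Gᶜ.Dart → V → ℝ := fun d w => if w = d.fst then 0 else 1
  let f : Gᶜ.Dart → V → Set ℝ := fun d w => Set.Icc (l d w) (r d w)
  have hne : ∀ d x y, (f d x ∩ f d y).Nonempty ↔ l d x ⊔ l d y ≤ r d x ⊓ r d y := by
    intro d x y
    simp only [f, Set.Icc_inter_Icc, Set.nonempty_Icc]
  refine ⟨_, fun i => SimpleGraph.mk (fun x y => x ≠ y ∧ (f (e.symm i) x ∩ f (e.symm i) y).Nonempty)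
    ⟨fun x y h => ⟨h.1.symm, by rw [Set.inter_comm]; exact h.2⟩⟩ ⟨fun x h => h.1 rfl⟩, ?_, ?_⟩
  · intro i
    refine ⟨f (e.symm i), fun v => ⟨_, _, ?_, rfl⟩, fun u v huv => by simp [huv]⟩
    have := (e.symm i).fst_ne_snd
    simp only [l, r]
    split_ifs <;> grind
  · ext x y
    simp only [SimpleGraph.iInf_adj]
    constructor
    · intro h
      refine ⟨fun i => ⟨h.ne, ?_⟩, h.ne⟩
      rw [hne]
      have h1 := (e.symm i).fst_ne_snd
      have h2 := ((SimpleGraph.compl_adj ..).1 (e.symm i).adj).2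
      have h3 := h.symm
      simp only [l, r, sup_le_iff, le_inf_iff]
      split_ifs <;> grind
    · rintro ⟨h, hxy⟩
      by_contra hG
      have := (h (e ⟨(x, y), (SimpleGraph.compl_adj ..).2 ⟨hxy, hG⟩⟩)).2
      rw [hne] at this
      simp [l, r] at this
      linarith

/-- If the complement of an interval graph lies in a graph without `K_{2,2}`, then two vertices
suffice to cover all its edges. -/
theorem exists_two_cover {V : Type*} [Fintype V] [DecidableEq V] [Nonempty V]
    (H I : SimpleGraph V) (hI : IsIntervalGraph I) (hIH : Iᶜ ≤ H)
    (hK22 : ¬∃ X Y : Finset V, Disjoint X Y ∧ X.card = 2 ∧ Y.card = 2 ∧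
      ∀ x ∈ X, ∀ y ∈ Y, H.Adj x y) :
    ∃ p q : V, ∀ u v, Iᶜ.Adj u v → u = p ∨ v = p ∨ u = q ∨ v = q := by
  obtain ⟨f, hf, hadj⟩ := hI
  choose a b hab hf using hf
  have hlt : ∀ u v, b u < a v → Iᶜ.Adj u v := by
    intro u v h
    have huv : u ≠ v := by
      rintro rfl
      exact absurd (hab u) (not_le.2 h)
    refine (SimpleGraph.compl_adj ..).2 ⟨huv, fun hA => ?_⟩
    obtain ⟨x, hx, hy⟩ := (hadj u v huv).1 hA
    rw [hf] at hx hy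
    linarith [hx.2, hy.1]
  have hcomp : ∀ u v, Iᶜ.Adj u v → b u < a v ∨ b v < a u := by
    intro u v h
    obtain ⟨huv, hA⟩ := (SimpleGraph.compl_adj ..).1 h
    by_contra! hc
    refine hA ((hadj u v huv).2 ?_)
    rw [hf, hf, Set.Icc_inter_Icc, Set.nonempty_Icc]
    exact sup_le (le_inf (hab u) hc.2) (le_inf hc.1 (hab v))
  obtain ⟨p, hp⟩ := Finite.exists_min b
  by_cases hex : ∃ u v, b u < a v ∧ u ≠ p ∧ v ≠ p
  · obtain ⟨u, v, huv, hup, hvp⟩ := hex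
    have key : ∀ u' v', b u' < a v' → u' ≠ p → v' ≠ p → v' = v := by
      intro u' v' h' hup' hvp'
      by_contra hvv
      -- whichever of `u`, `u'` ends first has both `v` and `v'` to its right
      obtain ⟨m, hmp, hmv, hmv'⟩ : ∃ m, m ≠ p ∧ b m < a v ∧ b m < a v' := by
        rcases le_total (b u) (b u') with h | h
        · exact ⟨u, hup, huv, h.trans_lt h'⟩
        · exact ⟨u', hup', h.trans_lt huv, h'⟩
      have hpm := hp m
      have h1 := (hlt m v hmv).ne
      have h2 := (hlt m v' hmv').ne
      refine hK22 ⟨{p, m}, {v, v'}, ?_, Finset.card_pair hmp.symm,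
        Finset.card_pair (Ne.symm hvv), ?_⟩
      · simp only [Finset.disjoint_left, Finset.mem_insert, Finset.mem_singleton]
        grind
      · simp only [Finset.mem_insert, Finset.mem_singleton]
        rintro x (rfl | rfl) y (rfl | rfl) <;> exact hIH (hlt _ _ (by linarith))
    refine ⟨p, v, fun x y hxy => ?_⟩
    rcases hcomp x y hxy with h | h
    · have := key x y h
      tauto
    · have := key y x h
      tauto
  · refine ⟨p, p, fun x y hxy => ?_⟩
    push Not at hex
    rcases hcomp x y hxy with h | h
    · have := hex x y h
      tauto
    · have := hex y x h
      tauto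

theorem box_lower_bound_C4free_complement {V : Type*} [Fintype V] [DecidableEq V]
    (G : SimpleGraph V) [DecidableRel G.Adj] (n k : ℕ)
    (hn : Fintype.card V = n) (hk1 : 1 ≤ k)
    (hreg : Gᶜ.IsRegularOfDegree k)
    (hK22 : ¬∃ X Y : Finset V, Disjoint X Y ∧ X.card = 2 ∧ Y.card = 2 ∧
      ∀ x ∈ X, ∀ y ∈ Y, Gᶜ.Adj x y) :
    (boxicity G : ℝ) ≥ (n : ℝ) / 4 := by
  obtain ⟨I, hI, hG⟩ : ∃ I : Fin (boxicity G) → SimpleGraph V,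
      (∀ i, IsIntervalGraph (I i)) ∧ G = ⨅ i, I i :=
    Nat.sInf_mem (exists_interval_representation G)
  generalize boxicity G = t at I hI hG ⊢
  suffices h : n ≤ 4 * t by
    have : (n : ℝ) ≤ 4 * t := by exact_mod_cast h
    linarith
  rcases isEmpty_or_nonempty V with hV | hV
  · rw [← hn, Fintype.card_eq_zero]
    exact Nat.zero_le _
  have hle : ∀ i, (I i)ᶜ ≤ Gᶜ := fun i => compl_le_compl (hG ▸ iInf_le I i)
  choose p q hpq using fun i => exists_two_cover Gᶜ (I i) (hI i) (hle i) hK22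
  have hsub : Gᶜ.edgeFinset ⊆ Finset.univ.biUnion
      fun i => Gᶜ.incidenceFinset (p i) ∪ Gᶜ.incidenceFinset (q i) := by
    intro e
    induction e with | _ x y
    intro he
    have hA : Gᶜ.Adj x y := by simpa using he
    obtain ⟨i, hi⟩ : ∃ i, (I i)ᶜ.Adj x y := by
      by_contra! hc
      refine ((SimpleGraph.compl_adj ..).1 hA).2 ?_
      rw [hG, SimpleGraph.iInf_adj]
      refine ⟨fun i => ?_, hA.ne⟩
      by_contra h
      exact hc i ((SimpleGraph.compl_adj ..).2 ⟨hA.ne, h⟩)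
    simp only [Finset.mem_biUnion, Finset.mem_univ, true_and, Finset.mem_union,
      SimpleGraph.mem_incidenceFinset, SimpleGraph.incidenceSet, Set.mem_sep_iff,
      SimpleGraph.mem_edgeSet, Sym2.mem_iff]
    have := hpq i x y hi
    refine ⟨i, ?_⟩
    grind
  have hcard : Gᶜ.edgeFinset.card ≤ t * (2 * k) := by
    refine (Finset.card_le_card hsub).trans ?_
    refine (Finset.card_biUnion_le_card_mul _ _ (2 * k) fun i _ => ?_).trans (by simp)
    refine (Finset.card_union_le _ _).trans ?_
    rw [SimpleGraph.card_incidenceFinset_eq_degree, SimpleGraph.card_incidenceFinset_eq_degree,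
      hreg.degree_eq, hreg.degree_eq, two_mul]
  have hsum := Gᶜ.sum_degrees_eq_twice_card_edges
  simp only [hreg.degree_eq, Finset.sum_const, Finset.card_univ, hn, smul_eq_mul] at hsum
  refine Nat.le_of_mul_le_mul_right (c := k) ?_ hk1
  linarith
end

section
/- Let t ≥ 2 be an integer and let G be a graph on n vertices with minimum degree δ and maximum degree Δ < n − 1. Suppose G is a t-expander, i.e., there do not exist disjoint sets X, Y ⊆ V with |X| = |Y| = t such that no vertex of X is adjacent in G to any vertex of Y. Then box(G) ≥ n(n − Δ − 1) / (2(t − 1)((n − Δ − 1) + (n − δ − 1))). -/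
open Finset in
/-- The initial segments of an ordering of the vertices by the value of `b`. -/
lemma exists_initial_segment {V : Type*} [Fintype V] (b : V → ℝ) (k : ℕ)
    (hk : k ≤ Fintype.card V) :
    ∃ A : Finset V, A.card = k ∧ ∀ x ∈ A, ∀ y ∉ A, b x ≤ b y := by
  classical
  induction k with
  | zero => exact ⟨∅, by simp⟩
  | succ k ih =>
    obtain ⟨A, hA, hAb⟩ := ih (by omega)
    have hne : (Aᶜ).Nonempty := by
      rw [← card_pos, card_compl]; omega
    obtain ⟨u, hu, hmin⟩ := exists_min_image Aᶜ b hne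
    rw [mem_compl] at hu
    refine ⟨insert u A, by rw [card_insert_of_notMem hu, hA], ?_⟩
    intro x hx y hy
    simp only [mem_insert, not_or] at hx hy
    rcases hx with rfl | hx
    · exact hmin y (by simpa using hy.2)
    · exact hAb x hx y hy.2

/-- The non-edges of an interval graph containing a `t`-expander are covered by at most
`2 (t - 1)` vertices. -/
lemma exists_cover_of_interval {V : Type*} [Fintype V] (G I : SimpleGraph V) (hGI : G ≤ I)
    (hI : IsIntervalGraph I) (t : ℕ) (ht : 2 ≤ t)
    (hexp : ¬∃ X Y : Finset V, Disjoint X Y ∧ X.card = t ∧ Y.card = t ∧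
      ∀ x ∈ X, ∀ y ∈ Y, ¬G.Adj x y) :
    ∃ C : Finset V, C.card ≤ 2 * (t - 1) ∧
      ∀ x y, x ≠ y → ¬I.Adj x y → x ∈ C ∨ y ∈ C := by
  classical
  by_cases hn : Fintype.card V ≤ t - 1
  · exact ⟨Finset.univ, by rw [Finset.card_univ]; omega, by simp⟩
  obtain ⟨f, hf, hadj⟩ := hI
  choose a b hab hfI using hf
  have hnon : ∀ x y, x ≠ y → (¬I.Adj x y ↔ b x < a y ∨ b y < a x) := by
    intro x y hxy
    rw [hadj x y hxy, hfI, hfI, Set.Icc_inter_Icc, Set.nonempty_Icc, sup_le_iff, le_inf_iff,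
      le_inf_iff]
    have := hab x
    have := hab y
    constructor
    · intro h
      by_contra! h'
      exact h ⟨⟨hab x, h'.2⟩, h'.1, hab y⟩
    · rintro (h | h) ⟨⟨_, h1⟩, h2, _⟩ <;> linarith
  obtain ⟨A, hA, hAb⟩ := exists_initial_segment b (t - 1) (by omega)
  have hne : (Aᶜ).Nonempty := by
    rw [← Finset.card_pos, Finset.card_compl]; omega
  obtain ⟨u, hu, hmin⟩ := Finset.exists_min_image Aᶜ b hne
  rw [Finset.mem_compl] at hu
  have hXb : ∀ x ∈ insert u A, b x ≤ b u := by
    intro x hx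
    rcases Finset.mem_insert.1 hx with rfl | hx
    · exact le_rfl
    · exact hAb x hx u hu
  let S : Finset V := Finset.univ.filter fun v => b u < a v
  have hS : S.card ≤ t - 1 := by
    by_contra! h
    obtain ⟨Y, hYS, hY⟩ := Finset.exists_subset_card_eq (show t ≤ S.card by omega)
    have hYa : ∀ y ∈ Y, b u < a y := fun y hy => (Finset.mem_filter.1 (hYS hy)).2
    have hdis : ∀ x ∈ insert u A, ∀ y ∈ Y, x ≠ y := by
      rintro x hx _ hy rfl
      linarith [hXb x hx, hYa x hy, hab x]
    refine hexp ⟨insert u A, Y, Finset.disjoint_left.2 fun x hx hy => hdis x hx x hy rfl,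
      by rw [Finset.card_insert_of_notMem hu, hA]; omega, hY, ?_⟩
    intro x hx y hy hG
    exact (hnon x y (hdis x hx y hy)).2 (Or.inl ((hXb x hx).trans_lt (hYa y hy))) (hGI hG)
  have key : ∀ x y, b x < a y → x ∈ A ∪ S ∨ y ∈ A ∪ S := by
    intro x y h
    by_cases hx : x ∈ A
    · exact Or.inl (Finset.mem_union_left _ hx)
    · refine Or.inr (Finset.mem_union_right _ (Finset.mem_filter.2 ⟨Finset.mem_univ _, ?_⟩))
      exact (hmin x (by simpa using hx)).trans_lt h
  refine ⟨A ∪ S, (Finset.card_union_le _ _).trans (by omega), fun x y hxy h => ?_⟩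
  rcases (hnon x y hxy).1 h with h | h
  · exact key x y h
  · exact (key y x h).symm

/-- Every finite graph is the intersection of finitely many interval graphs, namely of the
complete graphs minus one of its non-edges. -/
lemma boxicity_set_nonempty {V : Type*} [Fintype V] (G : SimpleGraph V) :
    {k : ℕ | ∃ I : Fin k → SimpleGraph V,
      (∀ i, IsIntervalGraph (I i)) ∧ G = ⨅ i, I i}.Nonempty := by
  classical
  let P := {p : V × V // p.1 ≠ p.2 ∧ ¬G.Adj p.1 p.2}
  -- the ends of the removed edge get `{0}` and `{1}`, all other vertices get `[0, 1]`
  let l : P → V → ℝ := fun p x => if x = p.1.2 then 1 else 0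
  let r : P → V → ℝ := fun p x => if x = p.1.1 then 0 else 1
  let J : P → SimpleGraph V := fun p =>
    { Adj := fun x y => x ≠ y ∧ (Set.Icc (l p x) (r p x) ∩ Set.Icc (l p y) (r p y)).Nonempty
      symm := ⟨fun x y h => ⟨h.1.symm, by rw [Set.inter_comm]; exact h.2⟩⟩
      loopless := ⟨fun x h => h.1 rfl⟩ }
  let e := Fintype.equivFin P
  refine ⟨Fintype.card P, fun i => J (e.symm i), fun i => ?_, ?_⟩
  · refine ⟨fun x => Set.Icc (l (e.symm i) x) (r (e.symm i) x), fun v => ⟨_, _, ?_, rfl⟩, ?_⟩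
    · have := (e.symm i).2.1
      simp only [l, r]
      split_ifs with h1 h2
      · exact absurd (h2.symm.trans h1) this
      all_goals norm_num
    · intro u v huv
      exact ⟨fun h => h.2, fun h => ⟨huv, h⟩⟩
  · ext x y
    rw [SimpleGraph.iInf_adj]
    constructor
    · intro h
      refine ⟨fun i => ⟨h.ne, ?_⟩, h.ne⟩
      generalize e.symm i = p
      obtain ⟨⟨u, v⟩, huv, hnadj⟩ := p
      rw [Set.Icc_inter_Icc, Set.nonempty_Icc, sup_le_iff, le_inf_iff, le_inf_iff]
      simp only [l, r]
      simp only at huv hnadj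
      have h1 : ¬(x = u ∧ y = v) := by rintro ⟨rfl, rfl⟩; exact hnadj h
      have h2 : ¬(x = v ∧ y = u) := by rintro ⟨rfl, rfl⟩; exact hnadj h.symm
      split_ifs <;> first | (norm_num; done) | (exfalso; simp_all)
    · rintro ⟨h, hxy⟩
      by_contra hG
      have := (h (e ⟨(x, y), hxy, hG⟩)).2
      rw [Equiv.symm_apply_apply, Set.Icc_inter_Icc, Set.nonempty_Icc] at this
      simp [l, r, hxy, hxy.symm] at this
      norm_num at this

theorem box_lower_bound_t_expander {V : Type*} [Fintype V]
    (G : SimpleGraph V) [DecidableRel G.Adj] (t : ℕ) (ht : 2 ≤ t)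
    (hΔ : G.maxDegree < Fintype.card V - 1)
    (hexp : ¬∃ X Y : Finset V, Disjoint X Y ∧ X.card = t ∧ Y.card = t ∧
      ∀ x ∈ X, ∀ y ∈ Y, ¬G.Adj x y) :
    (boxicity G : ℝ) ≥
      (Fintype.card V : ℝ) * ((Fintype.card V : ℝ) - G.maxDegree - 1) /
        (2 * ((t : ℝ) - 1) * (((Fintype.card V : ℝ) - G.maxDegree - 1) +
          ((Fintype.card V : ℝ) - G.minDegree - 1))) := by
  classical
  have hrep : ∃ I : Fin (boxicity G) → SimpleGraph V,
      (∀ i, IsIntervalGraph (I i)) ∧ G = ⨅ i, I i := Nat.sInf_mem (boxicity_set_nonempty G)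
  obtain ⟨I, hI, hG⟩ := hrep
  choose C hC hcov using fun i =>
    exists_cover_of_interval G (I i) (hG.le.trans (iInf_le I i)) (hI i) t ht hexp
  let U : Finset V := Finset.univ.biUnion C
  have hU : U.card ≤ boxicity G * (2 * (t - 1)) := by
    have := Finset.card_biUnion_le_card_mul (Finset.univ : Finset (Fin (boxicity G))) C
      (2 * (t - 1)) (fun i _ => hC i)
    simpa using this
  have hcovU : ∀ x y, Gᶜ.Adj x y → x ∈ U ∨ y ∈ U := by
    intro x y hxy
    rw [SimpleGraph.compl_adj] at hxy
    obtain ⟨hne, hnadj⟩ := hxy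
    rw [hG, SimpleGraph.iInf_adj] at hnadj
    obtain ⟨i, hi⟩ : ∃ i, ¬(I i).Adj x y := by
      by_contra! h
      exact hnadj ⟨h, hne⟩
    have hsub : C i ⊆ U := Finset.subset_biUnion_of_mem C (Finset.mem_univ i)
    exact (hcov i x y hne hi).imp (fun h => hsub h) (fun h => hsub h)
  obtain ⟨n, hn⟩ : ∃ n, n = Fintype.card V := ⟨_, rfl⟩
  have hcount : (Uᶜ).card * (n - 1 - G.maxDegree) ≤ U.card * (n - 1 - G.minDegree) := by
    refine Finset.card_mul_le_card_mul Gᶜ.Adj (fun x hx => ?_) (fun y _ => ?_)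
    · -- all complement-neighbours of a vertex outside `U` lie in `U`
      have hdeg := G.degree_compl x
      have hle := G.degree_le_maxDegree x
      have hsub : Gᶜ.neighborFinset x ⊆ U.bipartiteAbove Gᶜ.Adj x := by
        intro y hy
        rw [SimpleGraph.mem_neighborFinset] at hy
        exact Finset.mem_filter.2
          ⟨(hcovU x y hy).resolve_left (Finset.mem_compl.1 hx), hy⟩
      have := Finset.card_le_card hsub
      rw [SimpleGraph.card_neighborFinset_eq_degree] at this
      omega
    · have hdeg := G.degree_compl y
      have hle := G.minDegree_le_degree y
      have hsub : (Uᶜ).bipartiteBelow Gᶜ.Adj y ⊆ Gᶜ.neighborFinset y := by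
        intro x hx
        rw [SimpleGraph.mem_neighborFinset]
        exact (Finset.mem_filter.1 hx).2.symm
      have := Finset.card_le_card hsub
      rw [SimpleGraph.card_neighborFinset_eq_degree] at this
      omega
  have hmm : G.minDegree ≤ G.maxDegree := G.minDegree_le_maxDegree
  have hcc : (Uᶜ).card + U.card = n := by rw [Finset.card_compl_add_card, hn]
  rw [← hn] at hΔ ⊢
  obtain ⟨a, ha⟩ : ∃ a, n = G.maxDegree + 1 + a := ⟨n - 1 - G.maxDegree, by omega⟩
  obtain ⟨b, hb⟩ : ∃ b, n = G.minDegree + 1 + b := ⟨n - 1 - G.minDegree, by omega⟩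
  rw [show n - 1 - G.maxDegree = a by omega, show n - 1 - G.minDegree = b by omega] at hcount
  have ha0 : 0 < a := by omega
  obtain ⟨s, rfl⟩ : ∃ s, t = s + 1 := ⟨t - 1, by omega⟩
  have hs : 0 < s := by omega
  have hmain : n * a ≤ boxicity G * (2 * s * (a + b)) := by
    rw [Nat.add_sub_cancel] at hU
    calc n * a = (Uᶜ).card * a + U.card * a := by rw [← hcc]; ring
      _ ≤ U.card * b + U.card * a := by gcongr
      _ = U.card * (a + b) := by ring
      _ ≤ boxicity G * (2 * s) * (a + b) := by gcongr
      _ = _ := by ring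
  have ea : (n : ℝ) - G.maxDegree - 1 = a := by rw [ha]; push_cast; ring
  have eb : (n : ℝ) - G.minDegree - 1 = b := by rw [hb]; push_cast; ring
  have es : ((s + 1 : ℕ) : ℝ) - 1 = s := by push_cast; ring
  rw [ea, eb, es, ge_iff_le, div_le_iff₀ (by positivity)]
  exact_mod_cast hmain
end

section
/- Let G be a k-regular balanced bipartite graph with parts A = {a₁, …, aₙ} and B = {b₁, …, bₙ}, n ≥ 2 (every edge of G joins a vertex of A to a vertex of B and every vertex has degree k). Let M be the n×n bipartite incidence matrix of G, with M_{ij} = 1 if a_i is adjacent to b_j and M_{ij} = 0 otherwise, and list the eigenvalues (with multiplicity) of the symmetric positive semidefinite matrix MMᵀ in decreasing order μ₁ ≥ μ₂ ≥ ⋯ ≥ μₙ; let λ' = μ₂ be the second largest eigenvalue of MMᵀ. If λ' ≠ 0, then box(G) ≥ k/(4√λ'). -/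
/-! ### Interval graphs and boxicity -/

/-- The complete graph minus the single edge `uv` is an interval graph: `u` gets `[0, 0]`, `v` gets
`[1, 1]`, and every other vertex gets `[0, 1]`. -/
lemma isIntervalGraph_missing_one {V : Type*} (u v : V) (huv : u ≠ v) (I : SimpleGraph V)
    (hI : ∀ x y, I.Adj x y ↔ x ≠ y ∧ ¬((x = u ∧ y = v) ∨ (x = v ∧ y = u))) :
    IsIntervalGraph I := by
  classical
  refine ⟨fun x => Set.Icc (if x = v then 1 else 0) (if x = u then 0 else 1),
    fun x => ⟨_, _, ?_, rfl⟩, fun x y hxy => ?_⟩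
  · by_cases h1 : x = v
    · simp [h1, huv.symm]
    · simp only [h1, if_false]; split_ifs <;> norm_num
  · rw [hI, Set.Icc_inter_Icc, Set.nonempty_Icc]
    by_cases h1 : x = u <;> by_cases h2 : x = v <;> by_cases h3 : y = u <;>
      by_cases h4 : y = v <;> simp_all

/-- The infimum defining `boxicity` is attained for a finite vertex set. The set of admissible `k`
is nonempty because `G` is the intersection, over its non-edges, of the complete graph minus that
non-edge. -/
lemma exists_boxicity {V : Type*} [Finite V] (G : SimpleGraph V) :
    ∃ I : Fin (boxicity G) → SimpleGraph V, (∀ i, IsIntervalGraph (I i)) ∧ G = ⨅ i, I i := by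
  classical
  refine Nat.sInf_mem (s := {k : ℕ | ∃ I : Fin k → SimpleGraph V,
    (∀ i, IsIntervalGraph (I i)) ∧ G = ⨅ i, I i}) ?_
  let P := {p : V × V // p.1 ≠ p.2 ∧ ¬ G.Adj p.1 p.2}
  have : Fintype P := Fintype.ofFinite P
  let J : P → SimpleGraph V := fun p =>
    { Adj := fun x y => x ≠ y ∧ ¬((x = p.1.1 ∧ y = p.1.2) ∨ (x = p.1.2 ∧ y = p.1.1))
      symm := ⟨fun x y h => ⟨h.1.symm, by tauto⟩⟩
      loopless := ⟨fun x h => h.1 rfl⟩ }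
  refine ⟨Fintype.card P, fun i => J ((Fintype.equivFin P).symm i), fun i => ?_, ?_⟩
  · exact isIntervalGraph_missing_one _ _ ((Fintype.equivFin P).symm i).2.1 _ fun x y => Iff.rfl
  · rw [(Fintype.equivFin P).symm.iInf_comp (g := J)]
    ext x y
    rw [SimpleGraph.iInf_adj]
    constructor
    · intro h
      refine ⟨fun p => ⟨h.ne, ?_⟩, h.ne⟩
      rintro (⟨rfl, rfl⟩ | ⟨rfl, rfl⟩)
      · exact p.2.2 h
      · exact p.2.2 h.symm
    · rintro ⟨h, hne⟩
      by_contra hG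
      exact (h ⟨(x, y), hne, hG⟩).2 (Or.inl ⟨rfl, rfl⟩)

lemma IsIntervalGraph.exists_endpoints {V : Type*} {I : SimpleGraph V} (h : IsIntervalGraph I) :
    ∃ l r : V → ℝ, ∀ u v, u ≠ v → (¬ I.Adj u v ↔ r u < l v ∨ r v < l u) := by
  obtain ⟨f, hf, hI⟩ := h
  choose l r hlr hf using hf
  refine ⟨l, r, fun u v huv => ?_⟩
  rw [hI u v huv, hf, hf, Set.Icc_inter_Icc, Set.nonempty_Icc]
  have := hlr u
  have := hlr v
  simp only [sup_le_iff, le_inf_iff]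
  grind

open Finset in
/-- Regularity of a bipartite graph, in terms of the neighbours on the opposite side. -/
lemma card_nbrs_across {n k : ℕ} (G : SimpleGraph (Fin n ⊕ Fin n)) [DecidableRel G.Adj]
    (hbip : ∀ i j : Fin n,
      ¬G.Adj (Sum.inl i) (Sum.inl j) ∧ ¬G.Adj (Sum.inr i) (Sum.inr j))
    (hreg : G.IsRegularOfDegree k) :
    (∀ i, #{j | G.Adj (Sum.inl i) (Sum.inr j)} = k) ∧
    (∀ j, #{i | G.Adj (Sum.inl i) (Sum.inr j)} = k) := by
  constructor
  · intro i
    rw [← hreg (Sum.inl i), ← SimpleGraph.card_neighborFinset_eq_degree,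
      SimpleGraph.neighborFinset_eq_filter, card_filter, card_filter, Fintype.sum_sum_type]
    simp [(hbip _ _).1]
  · intro j
    rw [← hreg (Sum.inr j), ← SimpleGraph.card_neighborFinset_eq_degree,
      SimpleGraph.neighborFinset_eq_filter, card_filter, card_filter, Fintype.sum_sum_type]
    simp [(hbip _ _).2, G.adj_comm]

/-! ### The second eigenvalue of `M * Mᵀ` -/

open Finset Matrix in
/-- The roots `μ` of the characteristic polynomial are, up to reindexing, Mathlib's eigenvalues. -/
lemma exists_perm_eigenvalues {n : ℕ} (S : Matrix (Fin n) (Fin n) ℝ) (hS : S.IsHermitian)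
    (μ : Fin n → ℝ) (hsort : Antitone μ)
    (hchar : S.charpoly = ∏ i : Fin n, (Polynomial.X - Polynomial.C (μ i))) :
    ∃ σ : Fin n ≃ Fin n, ∀ i, hS.eigenvalues i = μ (σ i) := by
  have hroots : S.charpoly.roots = Multiset.map μ Finset.univ.val := by
    rw [hchar, Polynomial.roots_prod]
    · simp
    · simp [Finset.prod_ne_zero_iff, Polynomial.X_sub_C_ne_zero]
  have h := hS.sort_roots_charpoly_eq_eigenvalues₀
  have h2 : (S.charpoly.roots.map RCLike.re).sort (· ≥ ·) = List.ofFn μ := by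
    rw [hroots]
    simp_rw [Fin.univ_val_map, Multiset.map_coe, List.map_ofFn, Function.comp_def,
      RCLike.re_to_real, Multiset.coe_sort]
    apply List.mergeSort_of_pairwise
    simp_rw [decide_eq_true_eq, ← List.sortedGE_iff_pairwise]
    exact hsort.sortedGE_ofFn
  have h3 := h.symm.trans h2
  refine ⟨(Fintype.equivOfCardEq (Fintype.card_fin _)).symm.trans
    (finCongr (Fintype.card_fin n)), fun i => ?_⟩
  unfold Matrix.IsHermitian.eigenvalues
  set j : Fin (Fintype.card (Fin n)) := (Fintype.equivOfCardEq (Fintype.card_fin _)).symm i with hjdef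
  have h4 : (List.ofFn hS.eigenvalues₀)[j.1]? = (List.ofFn μ)[j.1]? := by rw [h3]
  have hj : j.1 < n := by simpa using j.2
  have hj' := j.2
  have h5 : hS.eigenvalues₀ j = μ ⟨j.1, hj⟩ := by simpa [List.getElem?_ofFn, hj] using h4
  exact h5

open Finset Matrix in
lemma dotProduct_mulVec_eq_sum {n : ℕ} (S : Matrix (Fin n) (Fin n) ℝ) (hS : S.IsHermitian)
    (w : Fin n → ℝ) :
    w ⬝ᵥ (S *ᵥ w) = ∑ i, hS.eigenvalues i * (w ⬝ᵥ (hS.eigenvectorBasis i).ofLp) ^ 2 := by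
  have h := hS.eigenvectorBasis.sum_inner_mul_inner (WithLp.toLp 2 w) (WithLp.toLp 2 (S *ᵥ w))
  simp only [EuclideanSpace.inner_eq_star_dotProduct, star_trivial] at h
  rw [dotProduct_comm, ← h]
  refine sum_congr rfl fun i _ => ?_
  have h2 : (S *ᵥ w) ⬝ᵥ (hS.eigenvectorBasis i).ofLp
      = hS.eigenvalues i * (w ⬝ᵥ (hS.eigenvectorBasis i).ofLp) := by
    have hT : Sᵀ = S := hS
    have hvec : S *ᵥ w = w ᵥ* S := by rw [← mulVec_transpose, hT]
    rw [hvec, ← dotProduct_mulVec, hS.mulVec_eigenvectorBasis,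
      dotProduct_smul, smul_eq_mul]
  rw [h2, dotProduct_comm]
  ring

open Finset Matrix in
lemma dotProduct_self_eq_sum {n : ℕ} (S : Matrix (Fin n) (Fin n) ℝ) (hS : S.IsHermitian)
    (w : Fin n → ℝ) :
    w ⬝ᵥ w = ∑ i, (w ⬝ᵥ (hS.eigenvectorBasis i).ofLp) ^ 2 := by
  have h := hS.eigenvectorBasis.sum_inner_mul_inner (WithLp.toLp 2 w) (WithLp.toLp 2 w)
  simp only [EuclideanSpace.inner_eq_star_dotProduct, star_trivial] at h
  rw [← h]
  refine sum_congr rfl fun i _ => ?_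
  rw [dotProduct_comm]
  ring

open Finset Matrix in
/-- Schur test: `‖Mᵀ u‖² ≤ k² ‖u‖²` for a nonnegative matrix with all row and column sums `k`. -/
lemma sum_sq_le_schur {n : ℕ} (M : Matrix (Fin n) (Fin n) ℝ) (k : ℝ) (hM0 : ∀ i j, 0 ≤ M i j)
    (hrow : ∀ i, ∑ j, M i j = k) (hcol : ∀ j, ∑ i, M i j = k) (u : Fin n → ℝ) :
    ∑ j, (∑ i, M i j * u i) ^ 2 ≤ k ^ 2 * ∑ i, u i ^ 2 := by
  have h1 : ∀ j, (∑ i, M i j * u i) ^ 2 ≤ k * ∑ i, M i j * u i ^ 2 := by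
    intro j
    rw [← hcol j]
    refine sum_sq_le_sum_mul_sum_of_sq_le_mul _ (fun i _ => hM0 i j)
      (fun i _ => mul_nonneg (hM0 i j) (sq_nonneg _)) (fun i _ => le_of_eq (by ring))
  calc _ ≤ ∑ j, k * ∑ i, M i j * u i ^ 2 := sum_le_sum fun j _ => h1 j
    _ = k * ∑ i, ∑ j, M i j * u i ^ 2 := by rw [← mul_sum, sum_comm]
    _ = _ := by
      simp_rw [← sum_mul, hrow, ← mul_sum]
      ring

open Finset Matrix in
/-- `‖Mᵀ u‖² ≤ μ₂ ‖u‖²` for `u ⊥ 1`. If this failed for some `u`, then `k² > μ₂` by the Schur test,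
so the quadratic form of `M * Mᵀ` would exceed `μ₂ ‖w‖²` for all nonzero `w` in the plane spanned by
`1` and `u`; but that plane meets the orthogonal complement of a top eigenvector nontrivially. -/
lemma second_eigenvalue_bound {n : ℕ} (hn : 1 < n) (M : Matrix (Fin n) (Fin n) ℝ) (k : ℝ)
    (hM0 : ∀ i j, 0 ≤ M i j)
    (hrow : ∀ i, ∑ j, M i j = k) (hcol : ∀ j, ∑ i, M i j = k)
    (μ : Fin n → ℝ) (hsort : Antitone μ)
    (hchar : (M * M.transpose).charpoly = ∏ i : Fin n, (Polynomial.X - Polynomial.C (μ i)))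
    (u : Fin n → ℝ) (hu : ∑ i, u i = 0) :
    ∑ j, (∑ i, M i j * u i) ^ 2 ≤ μ ⟨1, hn⟩ * ∑ i, u i ^ 2 := by
  have hS : (M * Mᵀ).IsHermitian := by simpa using Matrix.isHermitian_mul_conjTranspose_self M
  obtain ⟨σ, hσ⟩ := exists_perm_eigenvalues _ hS μ hsort hchar
  have hq : ∀ w : Fin n → ℝ, w ⬝ᵥ ((M * Mᵀ) *ᵥ w) = ∑ j, (∑ i, M i j * w i) ^ 2 := by
    intro w
    rw [← mulVec_mulVec, dotProduct_mulVec, ← mulVec_transpose]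
    simp [dotProduct, mulVec, sq]
  set m := μ ⟨1, hn⟩ with hm
  -- On the hyperplane orthogonal to a top eigenvector `e`, the quadratic form is at most `m`.
  set e := (hS.eigenvectorBasis (σ.symm ⟨0, by omega⟩)).ofLp with he
  have hperp : ∀ w : Fin n → ℝ, w ⬝ᵥ e = 0 → ∑ j, (∑ i, M i j * w i) ^ 2 ≤ m * (w ⬝ᵥ w) := by
    intro w hw
    rw [← hq, dotProduct_mulVec_eq_sum _ hS, dotProduct_self_eq_sum _ hS, mul_sum]
    refine sum_le_sum fun i _ => ?_
    by_cases hi : i = σ.symm ⟨0, by omega⟩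
    · subst hi
      rw [hw]; simp
    · refine mul_le_mul_of_nonneg_right ?_ (sq_nonneg _)
      rw [hσ]
      apply hsort
      have : (σ i).1 ≠ 0 := fun h => hi (by rw [Equiv.eq_symm_apply]; exact Fin.ext h)
      rw [Fin.le_def]; simp; omega
  by_contra! hcon
  have hschur := sum_sq_le_schur M k hM0 hrow hcol u
  set U := ∑ i, u i ^ 2 with hU
  have hU0 : 0 ≤ U := sum_nonneg fun i _ => sq_nonneg _
  have hUpos : 0 < U := by
    rcases hU0.lt_or_eq with h | h
    · exact h
    · rw [← h] at hcon hschur; linarith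
  have hkm : m < k ^ 2 := lt_of_mul_lt_mul_right (hcon.trans_le hschur) hU0
  -- The bound of `hperp` for the vector `α • 1 + β • u`, with both sides expanded.
  have key : ∀ α β : ℝ, α * (∑ i, e i) + β * (u ⬝ᵥ e) = 0 →
      k ^ 2 * α ^ 2 * n + β ^ 2 * ∑ j, (∑ i, M i j * u i) ^ 2 ≤ m * (α ^ 2 * n + β ^ 2 * U) := by
    intro α β hab
    have h := hperp (fun i => α + β * u i) (by
      rw [← hab]; simp [dotProduct, add_mul, sum_add_distrib, mul_sum, mul_assoc])
    have h1 : (fun i => α + β * u i) ⬝ᵥ (fun i => α + β * u i) = α ^ 2 * n + β ^ 2 * U := by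
      have : ∀ i, (α + β * u i) * (α + β * u i) = α ^ 2 + 2 * α * β * u i + β ^ 2 * u i ^ 2 :=
        fun i => by ring
      simp only [dotProduct, this, sum_add_distrib, ← mul_sum, hu]
      simp [hU]; ring
    have h2 : ∀ j, (∑ i, M i j * (α + β * u i)) = α * k + β * ∑ i, M i j * u i := by
      intro j
      rw [← hcol j, mul_sum, mul_sum, ← sum_add_distrib]
      exact sum_congr rfl fun i _ => by ring
    have h3 : ∑ j, ∑ i, M i j * u i = 0 := by
      rw [sum_comm]; simp_rw [← sum_mul, hrow, ← mul_sum, hu, mul_zero]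
    have h4 : ∑ j, (α * k + β * ∑ i, M i j * u i) ^ 2
        = k ^ 2 * α ^ 2 * n + β ^ 2 * ∑ j, (∑ i, M i j * u i) ^ 2 := by
      have : ∀ j, (α * k + β * ∑ i, M i j * u i) ^ 2
          = α ^ 2 * k ^ 2 + 2 * α * k * β * (∑ i, M i j * u i)
            + β ^ 2 * (∑ i, M i j * u i) ^ 2 := fun j => by ring
      simp only [this, sum_add_distrib, ← mul_sum, h3]
      simp; ring
    simp only [h2] at h
    rwa [h1, h4] at h
  have hn0 : (0 : ℝ) < n := by positivity
  -- A nonzero vector of the plane lying in the hyperplane: `1` if `1 ⊥ e`, and otherwise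
  -- `-⟨u, e⟩ • 1 + ⟨1, e⟩ • u`.
  by_cases hE : ∑ i, e i = 0
  · have := key 1 0 (by simp [hE])
    nlinarith
  · have := key (-(u ⬝ᵥ e)) (∑ i, e i) (by ring)
    have hp : 0 < (∑ i, e i) ^ 2 := by positivity
    have h1 := mul_lt_mul_of_pos_left hcon hp
    have h2 := mul_le_mul_of_nonneg_right hkm.le
      (mul_nonneg (sq_nonneg (-(u ⬝ᵥ e))) hn0.le)
    linarith

open Finset Matrix in
/-- If all entries of `M` equal one, then `M * Mᵀ` has rank at most one, so that two of its
eigenvalues cannot both be positive. -/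
lemma second_eigenvalue_of_ones {n : ℕ} (hn : 1 < n) (M : Matrix (Fin n) (Fin n) ℝ)
    (hM : ∀ i j, M i j = 1) (μ : Fin n → ℝ) (hsort : Antitone μ)
    (hchar : (M * M.transpose).charpoly = ∏ i : Fin n, (Polynomial.X - Polynomial.C (μ i))) :
    μ ⟨1, hn⟩ ≤ 0 := by
  have hS : (M * Mᵀ).IsHermitian := by simpa using Matrix.isHermitian_mul_conjTranspose_self M
  obtain ⟨σ, hσ⟩ := exists_perm_eigenvalues _ hS μ hsort hchar
  have hr : (M * Mᵀ).rank ≤ 1 := by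
    refine (rank_mul_le_left _ _).trans ?_
    have : M = vecMulVec (fun _ => 1) (fun _ => 1) := by ext i j; simp [hM, vecMulVec]
    rw [this]
    exact rank_vecMulVec_le _ _
  rw [hS.rank_eq_card_non_zero_eigs, Fintype.card_le_one_iff] at hr
  by_contra! hpos
  have h0 : 0 < μ ⟨0, by omega⟩ := hpos.trans_le (hsort (by simp [Fin.le_def]))
  have := hr ⟨σ.symm ⟨0, by omega⟩, by rw [hσ]; simpa using h0.ne'⟩
    ⟨σ.symm ⟨1, by omega⟩, by rw [hσ]; simpa using hpos.ne'⟩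
  simp at this

open Finset in
/-- Expander-mixing bound for sets `X`, `Y` with no edges between them, obtained by applying the
spectral gap `hR` to `u = 1_X - |X|/n`: every coordinate of `Mᵀ u` in `Y` equals `-k |X| / n`. -/
lemma card_mul_card_le {n : ℕ} (hn : 0 < n) (M : Matrix (Fin n) (Fin n) ℝ) (k lam : ℝ)
    (hlam : 0 ≤ lam) (hcol : ∀ j, ∑ i, M i j = k)
    (hR : ∀ u : Fin n → ℝ, ∑ i, u i = 0 →
      ∑ j, (∑ i, M i j * u i) ^ 2 ≤ lam * ∑ i, u i ^ 2)
    (X Y : Finset (Fin n)) (hXY : ∀ a ∈ X, ∀ b ∈ Y, M a b = 0) :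
    (#X : ℝ) * #Y * k ^ 2 ≤ lam * n ^ 2 := by
  have hn0 : (0 : ℝ) < n := by positivity
  rcases X.eq_empty_or_nonempty with rfl | hX
  · simp; positivity
  have hXpos : (0 : ℝ) < #X := by exact_mod_cast hX.card_pos
  set c : ℝ := #X / n with hc
  have hcn : c * n = #X := by rw [hc]; field_simp
  have h := hR (fun i => (if i ∈ X then 1 else 0) - c) (by
    simp [sum_sub_distrib]; linarith)
  have hU : ∑ i, ((if i ∈ X then (1 : ℝ) else 0) - c) ^ 2 ≤ #X := by
    have : ∀ i, ((if i ∈ X then (1 : ℝ) else 0) - c) ^ 2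
        = (if i ∈ X then (1 : ℝ) else 0) * (1 - 2 * c) + c ^ 2 := by
      intro i; split_ifs <;> ring
    simp only [this, sum_add_distrib, ← sum_mul]
    simp
    have hc0 : 0 ≤ c := by positivity
    nlinarith
  have hL : (#Y : ℝ) * (c * k) ^ 2
      ≤ ∑ j, (∑ i, M i j * ((if i ∈ X then (1 : ℝ) else 0) - c)) ^ 2 := by
    calc (#Y : ℝ) * (c * k) ^ 2 = ∑ j ∈ Y, (c * k) ^ 2 := by simp
      _ = ∑ j ∈ Y, (∑ i, M i j * ((if i ∈ X then (1 : ℝ) else 0) - c)) ^ 2 := by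
        refine sum_congr rfl fun j hj => ?_
        have : ∑ i, M i j * ((if i ∈ X then (1 : ℝ) else 0) - c) = - (c * k) := by
          rw [← hcol j, mul_sum, ← sum_neg_distrib]
          refine sum_congr rfl fun i _ => ?_
          split_ifs with hi
          · rw [hXY i hi j hj]; ring
          · ring
        rw [this]; ring
      _ ≤ _ := sum_le_sum_of_subset_of_nonneg (subset_univ _) fun _ _ _ => sq_nonneg _
  have h2 : (#Y : ℝ) * (c * k) ^ 2 ≤ lam * #X :=
    hL.trans (h.trans (mul_le_mul_of_nonneg_left hU hlam))
  have h3 : (#Y : ℝ) * (c * k) ^ 2 * n ^ 2 ≤ lam * #X * n ^ 2 :=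
    mul_le_mul_of_nonneg_right h2 (by positivity)
  have h4 : (#Y : ℝ) * (c * k) ^ 2 * n ^ 2 = (#X * #Y * k ^ 2) * #X := by
    rw [show (#Y : ℝ) * (c * k) ^ 2 * n ^ 2 = #Y * k ^ 2 * (c * n) ^ 2 by ring, hcn]; ring
  refine le_of_mul_le_mul_right ?_ hXpos
  linarith

/-! ### Counting staircases -/

open Finset in
/-- The inequality `∑ 1 / √j ≤ 2 √|T|`, where `j` is the rank of `b ∈ T` in decreasing order of `l`;
elements with the same value of `l` share the largest of their ranks. -/
lemma sum_inv_sqrt_rank_le {ι : Type*} [DecidableEq ι] (l : ι → ℝ) (T : Finset ι) :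
    ∑ b ∈ T, 1 / √(#{b' ∈ T | l b ≤ l b'} : ℝ) ≤ 2 * √(#T : ℝ) := by
  induction T using Finset.induction_on_min_value l with
  | empty => simp
  | insert a s ha hmin ih =>
    rw [sum_insert ha]
    have h1 : #{b' ∈ insert a s | l a ≤ l b'} = #s + 1 := by
      rw [filter_true_of_mem, card_insert_of_notMem ha]
      intro x hx
      rcases mem_insert.1 hx with rfl | hx
      · exact le_rfl
      · exact hmin x hx
    have h2 : ∑ b ∈ s, 1 / √(#{b' ∈ insert a s | l b ≤ l b'} : ℝ)
        ≤ ∑ b ∈ s, 1 / √(#{b' ∈ s | l b ≤ l b'} : ℝ) := by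
      refine sum_le_sum fun b hb => ?_
      have hp : 0 < #{b' ∈ s | l b ≤ l b'} := card_pos.2 ⟨b, by simp [hb]⟩
      refine one_div_le_one_div_of_le (by positivity) (Real.sqrt_le_sqrt ?_)
      exact_mod_cast card_le_card (filter_subset_filter _ (subset_insert _ _))
    rw [h1, card_insert_of_notMem ha]
    push_cast
    have h3 : 1 / √((#s : ℝ) + 1) ≤ 2 * √((#s : ℝ) + 1) - 2 * √(#s : ℝ) := by
      have hx := Real.sq_sqrt (show (0 : ℝ) ≤ #s + 1 by positivity)
      have hy := Real.sq_sqrt (show (0 : ℝ) ≤ #s by positivity)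
      have hxp : 0 < √((#s : ℝ) + 1) := by positivity
      rw [div_le_iff₀ hxp]
      nlinarith [sq_nonneg (√((#s : ℝ) + 1) - √(#s : ℝ))]
    linarith

open Finset in
/-- A staircase `{(a, b) | r a < l b}` with rows and columns of size at most `d`, in which every
rectangle has area at most `s²`, has at most `2 d s` cells. -/
lemma staircase_card_le {n d : ℕ} (s : ℝ) (hs : 0 ≤ s) (r l : Fin n → ℝ)
    (hrow : ∀ b, #{a | r a < l b} ≤ d) (hcol : ∀ a, #{b | r a < l b} ≤ d)
    (hrect : ∀ X Y : Finset (Fin n), (∀ a ∈ X, ∀ b ∈ Y, r a < l b) → (#X : ℝ) * #Y ≤ s ^ 2) :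
    (#{p : Fin n × Fin n | r p.1 < l p.2} : ℝ) ≤ 2 * d * s := by
  set h : Fin n → ℕ := fun b => #{a | r a < l b} with hh
  set T : Finset (Fin n) := {b | 0 < h b} with hT
  -- All of `T` lies in the column of any `a` with `r a < l b`, where `b ∈ T` minimizes `l`.
  have hTd : #T ≤ d := by
    rcases T.eq_empty_or_nonempty with hE | hE
    · simp [hE]
    obtain ⟨b, hb, hmin⟩ := T.exists_min_image l hE
    obtain ⟨a, ha⟩ := card_pos.1 (mem_filter.1 hb).2
    refine (card_le_card fun b' hb' => ?_).trans (hcol a)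
    exact mem_filter.2 ⟨mem_univ _, (mem_filter.1 ha).2.trans_le (hmin b' hb')⟩
  have hcard : #{p : Fin n × Fin n | r p.1 < l p.2} = ∑ b ∈ T, h b := by
    rw [sum_filter_of_ne fun b _ hb => Nat.pos_of_ne_zero hb]
    simp only [hh, card_filter]
    rw [Fintype.sum_prod_type_right]
  rw [hcard]
  push_cast
  have hb : ∀ b ∈ T, (h b : ℝ) ≤ √d * s * (1 / √(#{b' ∈ T | l b ≤ l b'} : ℝ)) := by
    intro b hb
    have hp : 0 < #{b' ∈ T | l b ≤ l b'} := card_pos.2 ⟨b, by simp [hb]⟩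
    have hX := hrect {a | r a < l b} {b' ∈ T | l b ≤ l b'} (by
      intro a ha b' hb'
      exact (mem_filter.1 ha).2.trans_le (mem_filter.1 hb').2)
    have hd : (h b : ℝ) ≤ d := by exact_mod_cast hrow b
    have hR0 : (0 : ℝ) < (#{b' ∈ T | l b ≤ l b'} : ℝ) := by exact_mod_cast hp
    rw [mul_one_div, le_div_iff₀ (by positivity)]
    -- The geometric mean of `h b ≤ d` and `h b ≤ s² / j`.
    refine le_of_sq_le_sq ?_ (by positivity)
    rw [mul_pow, mul_pow, Real.sq_sqrt hR0.le, Real.sq_sqrt (by positivity)]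
    calc _ = (h b : ℝ) * (h b * (#{b' ∈ T | l b ≤ l b'} : ℝ)) := by ring
      _ ≤ d * s ^ 2 := mul_le_mul hd hX (by positivity) (by positivity)
  calc ∑ b ∈ T, (h b : ℝ) ≤ ∑ b ∈ T, √d * s * (1 / √(#{b' ∈ T | l b ≤ l b'} : ℝ)) :=
        sum_le_sum hb
    _ = √d * s * ∑ b ∈ T, (1 / √(#{b' ∈ T | l b ≤ l b'} : ℝ)) := by rw [mul_sum]
    _ ≤ √d * s * (2 * √d) := by
      refine mul_le_mul_of_nonneg_left ((sum_inv_sqrt_rank_le l T).trans ?_) (by positivity)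
      have : √(#T : ℝ) ≤ √d := Real.sqrt_le_sqrt (by exact_mod_cast hTd)
      linarith
    _ = 2 * d * s := by
      have := Real.sq_sqrt (show (0 : ℝ) ≤ d by positivity)
      linear_combination 2 * s * this

/-! ### The lower bound -/

open Finset in
lemma card_not_eq_sub {n k : ℕ} (p : Fin n → Prop) [DecidablePred p] (h : #{j | p j} = k) :
    #{j | ¬ p j} = n - k := by
  have := card_filter_add_card_filter_not (s := (univ : Finset (Fin n))) p
  rw [h, card_univ, Fintype.card_fin] at this
  omega

open Finset in
theorem box_spectral_lower_bound_bipartite (n k : ℕ) (hn : 2 ≤ n)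
    (G : SimpleGraph (Fin n ⊕ Fin n)) [DecidableRel G.Adj]
    (hbip : ∀ i j : Fin n,
      ¬G.Adj (Sum.inl i) (Sum.inl j) ∧ ¬G.Adj (Sum.inr i) (Sum.inr j))
    (hreg : G.IsRegularOfDegree k)
    (M : Matrix (Fin n) (Fin n) ℝ)
    (hM : ∀ i j : Fin n, M i j = if G.Adj (Sum.inl i) (Sum.inr j) then 1 else 0)
    (μ : Fin n → ℝ) (hsort : Antitone μ)
    (hchar : (M * M.transpose).charpoly =
      ∏ i : Fin n, (Polynomial.X - Polynomial.C (μ i)))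
    (lam' : ℝ) (hlam : lam' = μ ⟨1, by omega⟩) :
    lam' ≠ 0 → (boxicity G : ℝ) ≥ (k : ℝ) / (4 * Real.sqrt lam') := by
  intro _
  -- If `√lam' = 0` or `k = 0`, the right-hand side is zero.
  rcases (Real.sqrt_nonneg lam').eq_or_lt with h0 | hsq
  · rw [← h0]; simp
  have hpos : 0 < lam' := Real.sqrt_pos.1 hsq
  rcases Nat.eq_zero_or_pos k with rfl | hk
  · simp
  obtain ⟨hA, hB⟩ := card_nbrs_across G hbip hreg
  have hrow : ∀ i, ∑ j, M i j = (k : ℝ) := by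
    intro i; simp only [hM, ← hA i, card_filter]; push_cast; rfl
  have hcol : ∀ j, ∑ i, M i j = (k : ℝ) := by
    intro j; simp only [hM, ← hB j, card_filter]; push_cast; rfl
  have hM0 : ∀ i j, 0 ≤ M i j := by
    intro i j; rw [hM]; split_ifs <;> norm_num
  have hA' : ∀ i, #{j | ¬ G.Adj (Sum.inl i) (Sum.inr j)} = n - k :=
    fun i => card_not_eq_sub _ (hA i)
  have hB' : ∀ j, #{i | ¬ G.Adj (Sum.inl i) (Sum.inr j)} = n - k :=
    fun j => card_not_eq_sub _ (hB j)
  have hd : 0 < n - k := by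
    by_contra! hd
    have hones : ∀ i j, M i j = 1 := by
      intro i j
      have h := hA' i
      rw [Nat.le_zero.1 hd, card_eq_zero, filter_eq_empty_iff] at h
      rw [hM, if_pos (not_not.1 (h (mem_univ j)))]
    have := second_eigenvalue_of_ones hn M hones μ hsort hchar
    linarith
  have hk0 : (0 : ℝ) < k := by exact_mod_cast hk
  have hn0 : (0 : ℝ) < n := by positivity
  set s : ℝ := √lam' * n / k with hs
  have hs0 : 0 ≤ s := by positivity
  have hrect : ∀ X Y : Finset (Fin n),
      (∀ a ∈ X, ∀ b ∈ Y, ¬ G.Adj (Sum.inl a) (Sum.inr b)) → (#X : ℝ) * #Y ≤ s ^ 2 := by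
    intro X Y hXY
    have h := card_mul_card_le (by omega) M k lam' hpos.le hcol
      (fun u hu => hlam ▸ second_eigenvalue_bound hn M k hM0 hrow hcol μ hsort hchar u hu)
      X Y (fun a ha b hb => by rw [hM, if_neg (hXY a ha b hb)])
    rw [hs, div_pow, mul_pow, Real.sq_sqrt hpos.le, le_div_iff₀ (by positivity)]
    exact h
  obtain ⟨I, hI, hG⟩ := exists_boxicity G
  choose l r hlr using fun i => (hI i).exists_endpoints
  have hGI : ∀ i u v, G.Adj u v → (I i).Adj u v := by
    intro i u v huv
    have h : G ≤ I i := by rw [hG]; exact iInf_le _ i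
    exact h huv
  -- The pairs of `A × B` whose intervals in the `i`-th representation are disjoint, with the
  -- interval of `a` on the left (`P i`) or on the right (`Q i`).
  let P : Fin (boxicity G) → Finset (Fin n × Fin n) := fun i =>
    {p | r i (Sum.inl p.1) < l i (Sum.inr p.2)}
  let Q : Fin (boxicity G) → Finset (Fin n × Fin n) := fun i =>
    {p | r i (Sum.inr p.2) < l i (Sum.inl p.1)}
  have hPn : ∀ i a b, r i (Sum.inl a) < l i (Sum.inr b) → ¬ G.Adj (Sum.inl a) (Sum.inr b) :=
    fun i a b h hadj => (hlr i _ _ (by simp)).2 (Or.inl h) (hGI i _ _ hadj)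
  have hQn : ∀ i a b, r i (Sum.inr b) < l i (Sum.inl a) → ¬ G.Adj (Sum.inl a) (Sum.inr b) :=
    fun i a b h hadj => (hlr i _ _ (by simp)).2 (Or.inr h) (hGI i _ _ hadj)
  have hP : ∀ i, (#(P i) : ℝ) ≤ 2 * (n - k : ℕ) * s := by
    intro i
    refine staircase_card_le s hs0 (fun a => r i (Sum.inl a)) (fun b => l i (Sum.inr b)) ?_ ?_ ?_
    · intro b
      rw [← hB' b]
      exact card_le_card (monotone_filter_right _ fun a _ h => hPn i a b h)
    · intro a
      rw [← hA' a]
      exact card_le_card (monotone_filter_right _ fun b _ h => hPn i a b h)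
    · exact fun X Y h => hrect X Y fun a ha b hb => hPn i a b (h a ha b hb)
  have hQ : ∀ i, (#(Q i) : ℝ) ≤ 2 * (n - k : ℕ) * s := by
    intro i
    have hswap : #(Q i) = #{q : Fin n × Fin n | r i (Sum.inr q.1) < l i (Sum.inl q.2)} :=
      card_equiv (Equiv.prodComm _ _) (by simp [Q])
    rw [hswap]
    refine staircase_card_le s hs0 (fun b => r i (Sum.inr b)) (fun a => l i (Sum.inl a)) ?_ ?_ ?_
    · intro a
      rw [← hA' a]
      exact card_le_card (monotone_filter_right _ fun b _ h => hQn i a b h)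
    · intro b
      rw [← hB' b]
      exact card_le_card (monotone_filter_right _ fun a _ h => hQn i a b h)
    · intro X Y h
      rw [mul_comm]
      exact hrect Y X fun a ha b hb => hQn i a b (h b hb a ha)
  have hD : #{p : Fin n × Fin n | ¬ G.Adj (Sum.inl p.1) (Sum.inr p.2)} = n * (n - k) := by
    rw [card_filter, Fintype.sum_prod_type]
    simp_rw [← card_filter, hA']
    simp
  have hcover : ({p | ¬ G.Adj (Sum.inl p.1) (Sum.inr p.2)} : Finset (Fin n × Fin n)) ⊆
      univ.biUnion fun i => P i ∪ Q i := by
    intro p hp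
    have hp := (mem_filter.1 hp).2
    rw [hG, SimpleGraph.iInf_adj] at hp
    have : ∃ i, ¬ (I i).Adj (Sum.inl p.1) (Sum.inr p.2) := by
      by_contra! h
      exact hp ⟨h, by simp⟩
    obtain ⟨i, hi⟩ := this
    rw [mem_biUnion]
    refine ⟨i, mem_univ _, ?_⟩
    simpa [P, Q] using (hlr i _ _ (by simp)).1 hi
  have hcount : ((n * (n - k : ℕ) : ℕ) : ℝ) ≤ boxicity G * (4 * (n - k : ℕ) * s) := by
    calc ((n * (n - k : ℕ) : ℕ) : ℝ) ≤ ((∑ i, (#(P i) + #(Q i)) : ℕ) : ℝ) := by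
          rw [← hD]
          exact_mod_cast (card_le_card hcover).trans
            (card_biUnion_le.trans (sum_le_sum fun i _ => card_union_le _ _))
      _ = ∑ i, ((#(P i) : ℝ) + #(Q i)) := by push_cast; rfl
      _ ≤ ∑ _i : Fin (boxicity G), (4 * (n - k : ℕ) * s) :=
          sum_le_sum fun i _ => by linarith [hP i, hQ i]
      _ = _ := by simp
  have hd0 : (0 : ℝ) < (n - k : ℕ) := by exact_mod_cast hd
  rw [ge_iff_le, div_le_iff₀ (by positivity)]
  refine le_of_mul_le_mul_right ?_ (mul_pos hn0 hd0)
  have hsk : s * k = √lam' * n := by rw [hs]; field_simp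
  push_cast at hcount
  calc (k : ℝ) * (n * (n - k : ℕ)) ≤ k * (boxicity G * (4 * (n - k : ℕ) * s)) := by gcongr
    _ = boxicity G * (4 * (n - k : ℕ)) * (s * k) := by ring
    _ = _ := by rw [hsk]; ring
end
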